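/- Let 𝒳, 𝒴, 𝒵, 𝒰 be finite sets, P_{XYZ} a pmf on 𝒳×𝒴×𝒵, and Q_{XYZ} a pmf satisfying Q_{YZ|X} = Q_{Z|X} Q_{Y|Z} (i.e., X → Z → Y is a Markov chain under Q). For any pmf P_{UX} on 𝒰×𝒳 whose 𝒳-marginal is P_X, extend it to P_{UXYZ} = P_{UX} P_{YZ|X}. Then ∑_u P_U(u) f(P_{X|U}(·|u)) ≤ D(P_{UYZ} ‖ P_{UZ} Q_{Y|Z}). -/

import Mathlib

open scoped BigOperators

noncomputable section

open Classical in
/-- Pushforward of a finitely supported mass function along a map. -/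
def pushf {Ω α : Type*} [Fintype Ω] (p : Ω → ℝ) (f : Ω → α) : α → ℝ :=
  fun a => ∑ ω, if f ω = a then p ω else 0

/-- `p` is a probability mass function. -/
def IsPMF {α : Type*} [Fintype α] (p : α → ℝ) : Prop :=
  (∀ a, 0 ≤ p a) ∧ ∑ a, p a = 1

/-- Kullback–Leibler divergence `D(p‖q)` of mass functions, valued in `EReal`
(equal to `⊤` if `p` is not absolutely continuous w.r.t. `q`). -/
def klDiv {α : Type*} [Fintype α] (p q : α → ℝ) : EReal :=
  if ∀ a, q a = 0 → p a = 0 then ((∑ a, p a * Real.log (p a / q a) : ℝ) : EReal) else ⊤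

/-- Shannon entropy. -/
def entropy {α : Type*} [Fintype α] (p : α → ℝ) : ℝ :=
  -∑ a, p a * Real.log (p a)

/-- Conditional mutual information `I(A;B|C)` under the mass function `p`. -/
def condMI {Ω α β γ : Type*} [Fintype Ω] [Fintype α] [Fintype β] [Fintype γ]
    (p : Ω → ℝ) (A : Ω → α) (B : Ω → β) (C : Ω → γ) : ℝ :=
  entropy (pushf p (fun ω => (A ω, C ω))) + entropy (pushf p (fun ω => (B ω, C ω)))
    - entropy (pushf p (fun ω => (A ω, B ω, C ω))) - entropy (pushf p C)

/-- First marginal of a joint mass function. -/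
def margFst {α β : Type*} [Fintype α] [Fintype β] (p : α × β → ℝ) : α → ℝ :=
  fun a => ∑ b, p (a, b)

/-- Conditional mass function of the second coordinate given the first. -/
def condSnd {α β : Type*} [Fintype α] [Fintype β] (p : α × β → ℝ) : α → β → ℝ :=
  fun a b => p (a, b) / margFst p a

/-- Output distribution of a channel on an input distribution. -/
def outDist {α β : Type*} [Fintype α] [Fintype β] (ch : α → β → ℝ) (pa : α → ℝ) : β → ℝ :=
  fun b => ∑ a, pa a * ch a b

/-- The difference functional
`f(P'_X) = sup_{Q̂_X ≪ Q_X} D(P'_Y‖Q̂_Y) − D(P'_Z‖Q̂_Z)`. -/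
def fdiff {X Y Z : Type*} [Fintype X] [Fintype Y] [Fintype Z]
    (pYgX : X → Y → ℝ) (pZgX : X → Z → ℝ) (qYgX : X → Y → ℝ) (qZgX : X → Z → ℝ)
    (qX : X → ℝ) (pX' : X → ℝ) : EReal :=
  sSup {d : EReal | ∃ qhX : X → ℝ, IsPMF qhX ∧ (∀ x, qX x = 0 → qhX x = 0) ∧
    d = klDiv (outDist pYgX pX') (outDist qYgX qhX)
        - klDiv (outDist pZgX pX') (outDist qZgX qhX)}

/-- The quantity `G_{P_XY, Q_XY, P_XZ, Q_XZ}(R)`: the supremum over finite sets `𝒰`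
(represented by `Fin m`) and channels `P_{U|X}` with `I_P(U;X|Y) ≤ R` and `I_P(U;X|Z) ≤ R`
of `∑_u P_U(u) f(P_{X|U}(·|u))`. -/
def Gexp {X Y Z : Type*} [Fintype X] [Fintype Y] [Fintype Z]
    (pXY : X × Y → ℝ) (qXY : X × Y → ℝ) (pXZ : X × Z → ℝ) (qXZ : X × Z → ℝ)
    (R : ℝ) : EReal :=
  sSup {v : EReal | ∃ (m : ℕ) (ch : X → Fin m → ℝ),
    (∀ x, IsPMF (ch x)) ∧
    condMI (fun w : Fin m × X × Y => ch w.2.1 w.1 * pXY (w.2.1, w.2.2))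
      (fun w => w.1) (fun w => w.2.1) (fun w => w.2.2) ≤ R ∧
    condMI (fun w : Fin m × X × Z => ch w.2.1 w.1 * pXZ (w.2.1, w.2.2))
      (fun w => w.1) (fun w => w.2.1) (fun w => w.2.2) ≤ R ∧
    v = ∑ u : Fin m,
      ((∑ x, ch x u * margFst pXY x : ℝ) : EReal) *
        fdiff (condSnd pXY) (condSnd pXZ) (condSnd qXY) (condSnd qXZ)
          (margFst qXY)
          (fun x => ch x u * margFst pXY x / ∑ x', ch x' u * margFst pXY x')}

/-- The error exponent of distributed hypothesis testing, via the Ahlswede–Csiszár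
multi-letter characterization. -/
def errExp {X W : Type*} [Fintype X] [Fintype W]
    (pXW qXW : X × W → ℝ) (R : ℝ) : EReal :=
  sSup {v : EReal | ∃ n : ℕ, 0 < n ∧
    ∃ κ : (Fin n → X) → Fin (2 ^ ⌊(n : ℝ) * R⌋₊) → ℝ,
      (∀ x, IsPMF (κ x)) ∧
      v = (((n : ℝ)⁻¹ : ℝ) : EReal) *
        klDiv
          (fun mw : Fin (2 ^ ⌊(n : ℝ) * R⌋₊) × (Fin n → W) =>
            ∑ x : Fin n → X, (∏ i, pXW (x i, mw.2 i)) * κ x mw.1)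
          (fun mw : Fin (2 ^ ⌊(n : ℝ) * R⌋₊) × (Fin n → W) =>
            ∑ x : Fin n → X, (∏ i, qXW (x i, mw.2 i)) * κ x mw.1)}

/-! Fix `u`, let `r` be the law of `(Y, Z)` given `u`, and let `q` be the `Z`-law produced by a
competitor `Q̂_X`. By the Markov property its `Y`-law is the `Y`-marginal of `q × Q_{Y|Z}`, so data
processing followed by the chain rule gives
`D(r_Y ‖ Q̂_Y) ≤ D(r ‖ q × Q_{Y|Z}) = D(r_Z ‖ q) + D(r ‖ r_Z × Q_{Y|Z})`.
The last term does not involve the competitor, hence it bounds `f`. Divergence is homogeneous under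
a common scaling and additive over the slices in `u`, so averaging over `u` gives the claim. -/

section LogSum

variable {ι : Type*} {s : Finset ι} {p q : ι → ℝ}

-- Jensen for `t ↦ t log t` at the points `p i / q i` with weights `q i / ∑ q`.
lemma sum_mul_log_sum_div_sum_le (hp : ∀ i ∈ s, 0 ≤ p i) (hq : ∀ i ∈ s, 0 ≤ q i)
    (hpq : ∀ i ∈ s, q i = 0 → p i = 0) :
    (∑ i ∈ s, p i) * Real.log ((∑ i ∈ s, p i) / ∑ i ∈ s, q i)
      ≤ ∑ i ∈ s, p i * Real.log (p i / q i) := by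
  rcases (Finset.sum_nonneg hq).eq_or_lt with hS | hS
  · have hp0 : ∀ i ∈ s, p i = 0 := fun i hi =>
      hpq i hi ((Finset.sum_eq_zero_iff_of_nonneg hq).1 hS.symm i hi)
    rw [Finset.sum_eq_zero hp0, zero_mul]
    exact (Finset.sum_eq_zero fun i hi => by rw [hp0 i hi, zero_mul]).ge
  · set S := ∑ i ∈ s, q i
    have cancel : ∀ i ∈ s, q i * (p i / q i) = p i := fun i hi =>
      mul_div_cancel_of_imp' (hpq i hi)
    have jensen := Real.convexOn_mul_log.map_sum_le (t := s) (w := fun i => q i / S)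
      (p := fun i => p i / q i) (fun i hi => div_nonneg (hq i hi) hS.le)
      (by rw [← Finset.sum_div, div_self hS.ne'])
      (fun i hi => div_nonneg (hp i hi) (hq i hi))
    have mean : ∑ i ∈ s, (q i / S) • (p i / q i) = (∑ i ∈ s, p i) / S := by
      rw [Finset.sum_div]
      refine Finset.sum_congr rfl fun i hi => ?_
      rw [smul_eq_mul, div_mul_eq_mul_div, cancel i hi]
    have value : ∑ i ∈ s, (q i / S) • (p i / q i * Real.log (p i / q i))
        = (∑ i ∈ s, p i * Real.log (p i / q i)) / S := by
      rw [Finset.sum_div]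
      refine Finset.sum_congr rfl fun i hi => ?_
      rw [smul_eq_mul, ← mul_assoc, div_mul_eq_mul_div, cancel i hi, div_mul_eq_mul_div]
    rwa [mean, value, div_mul_eq_mul_div, div_le_div_iff_of_pos_right hS] at jensen

end LogSum

section Pushforward

variable {Ω α β : Type*} [Fintype Ω]

lemma pushf_nonneg {p : Ω → ℝ} (hp : ∀ ω, 0 ≤ p ω) (f : Ω → α) (a : α) : 0 ≤ pushf p f a :=
  Finset.sum_nonneg fun ω _ => by split_ifs <;> simp [hp ω]

lemma pushf_eq_zero {p : Ω → ℝ} {f : Ω → α} {a : α} (h : ∀ ω, f ω = a → p ω = 0) :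
    pushf p f a = 0 := by
  classical
  exact Finset.sum_eq_zero fun ω _ => ite_eq_right_iff.2 (h ω)

lemma eq_zero_of_pushf_eq_zero {p : Ω → ℝ} (hp : ∀ ω, 0 ≤ p ω) {f : Ω → α} {ω : Ω}
    (h : pushf p f (f ω) = 0) : p ω = 0 := by
  have hterm := (Finset.sum_eq_zero_iff_of_nonneg
    fun ω' _ => by split_ifs <;> simp [hp ω']).1 h ω (Finset.mem_univ ω)
  simpa using hterm

lemma sum_pushf_mul [Fintype α] (p : Ω → ℝ) (f : Ω → α) (h : α → ℝ) :
    ∑ a, pushf p f a * h a = ∑ ω, p ω * h (f ω) := by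
  classical
  simp only [pushf, Finset.sum_mul, ite_mul, zero_mul]
  rw [Finset.sum_comm]
  simp

lemma pushf_pushf [Fintype α] (p : Ω → ℝ) (f : Ω → α) (g : α → β) :
    pushf (pushf p f) g = pushf p (fun ω => g (f ω)) := by
  classical
  funext b
  simpa [pushf] using sum_pushf_mul p f (fun a => if g a = b then 1 else 0)

lemma pushf_comp_apply (p : Ω → ℝ) (f : Ω → α) {e : α → β} (he : e.Injective) (a : α) :
    pushf p (fun ω => e (f ω)) (e a) = pushf p f a := by
  classical
  exact Finset.sum_congr rfl fun _ _ => if_congr he.eq_iff rfl rfl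

lemma pushf_fst [Fintype α] [Fintype β] (p : α × β → ℝ) : pushf p Prod.fst = margFst p := by
  classical
  funext a
  simp [pushf, margFst, Fintype.sum_prod_type_right]

lemma pushf_snd [Fintype α] [Fintype β] (p : α × β → ℝ) (b : β) :
    pushf p Prod.snd b = ∑ a, p (a, b) := by
  classical
  simp [pushf, Fintype.sum_prod_type]

lemma margFst_pushf [Fintype α] [Fintype β] (p : α × Ω → ℝ) (g : Ω → β) :
    margFst (pushf p fun w => (w.1, g w.2)) = margFst p := by
  rw [← pushf_fst, pushf_pushf, ← pushf_fst]

end Pushforward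

section Channels

variable {Ω α β : Type*} [Fintype Ω] [Fintype α] [Fintype β]

lemma condSnd_nonneg {p : α × β → ℝ} (hp : ∀ w, 0 ≤ p w) (a : α) (b : β) :
    0 ≤ condSnd p a b :=
  div_nonneg (hp _) (Finset.sum_nonneg fun _ _ => hp _)

lemma condSnd_pushf (p : α × Ω → ℝ) (g : Ω → β) :
    condSnd (pushf p fun w => (w.1, g w.2)) = fun a => pushf (condSnd p a) g := by
  classical
  funext a b
  rw [condSnd, margFst_pushf]
  simp [pushf, condSnd, Fintype.sum_prod_type, Finset.sum_div, ite_and, ite_div]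

lemma outDist_nonneg {ch : α → β → ℝ} (hch : ∀ a b, 0 ≤ ch a b) {p : α → ℝ}
    (hp : ∀ a, 0 ≤ p a) (b : β) : 0 ≤ outDist ch p b :=
  Finset.sum_nonneg fun a _ => mul_nonneg (hp a) (hch a b)

lemma outDist_smul (ch : α → β → ℝ) (c : ℝ) (p : α → ℝ) :
    outDist ch (c • p) = c • outDist ch p := by
  funext b
  simp [outDist, Finset.mul_sum, mul_assoc]

lemma outDist_pushf (K : α → Ω → ℝ) (g : Ω → β) (p : α → ℝ) :
    outDist (fun a => pushf (K a) g) p = pushf (outDist K p) g := by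
  funext b
  simp only [outDist, pushf, Finset.mul_sum, mul_ite, mul_zero]
  rw [Finset.sum_comm]
  simp only [Finset.sum_ite_irrel, Finset.sum_const_zero]

lemma outDist_outDist (V : α → Ω → ℝ) (W : Ω → β → ℝ) (p : α → ℝ) :
    outDist (fun a => outDist W (V a)) p = outDist W (outDist V p) := by
  funext b
  simp only [outDist, Finset.mul_sum, Finset.sum_mul, mul_assoc]
  exact Finset.sum_comm

lemma pushf_fst_mul_channel (q : α → ℝ) (W : α → β → ℝ) :
    pushf (fun w : β × α => q w.2 * W w.2 w.1) Prod.fst = outDist W q :=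
  pushf_fst _

end Channels

section Divergence

variable {Ω α β : Type*} [Fintype Ω] [Fintype α] [Fintype β]

lemma coe_sum_ereal {ι : Type*} (s : Finset ι) (f : ι → ℝ) :
    ((∑ i ∈ s, f i : ℝ) : EReal) = ∑ i ∈ s, (f i : EReal) :=
  map_sum (⟨⟨Real.toEReal, EReal.coe_zero⟩, EReal.coe_add⟩ : ℝ →+ EReal) f s

lemma klDiv_ne_bot (p q : α → ℝ) : klDiv p q ≠ ⊥ := by
  unfold klDiv
  split_ifs
  · exact EReal.coe_ne_bot _
  · exact top_ne_bot

lemma klDiv_zero_left (q : α → ℝ) : klDiv 0 q = 0 := by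
  simp [klDiv]

lemma klDiv_smul_smul {c : ℝ} (hc : 0 < c) (p q : α → ℝ) :
    klDiv (c • p) (c • q) = c * klDiv p q := by
  simp only [klDiv, Pi.smul_apply, smul_eq_mul, mul_eq_zero, hc.ne', false_or]
  split_ifs
  · rw [← EReal.coe_mul, Finset.mul_sum]
    simp only [mul_div_mul_left _ _ hc.ne', mul_assoc]
  · rw [EReal.coe_mul_top_of_pos hc]

lemma klDiv_prod (p q : α × β → ℝ) :
    klDiv p q = ∑ a, klDiv (fun b => p (a, b)) (fun b => q (a, b)) := by
  classical
  by_cases hac : ∀ w, q w = 0 → p w = 0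
  · rw [klDiv, if_pos hac, Fintype.sum_prod_type, coe_sum_ereal]
    exact Finset.sum_congr rfl fun a _ => (if_pos fun b => hac (a, b)).symm
  · obtain ⟨⟨a, b⟩, hq, hp⟩ : ∃ w, q w = 0 ∧ p w ≠ 0 := by simpa using hac
    have htop : klDiv (fun b => p (a, b)) (fun b => q (a, b)) = ⊤ := if_neg fun h => hp (h b hq)
    have hrest : ∑ a' ∈ Finset.univ.erase a,
        klDiv (fun b => p (a', b)) (fun b => q (a', b)) ≠ ⊥ := fun h =>
      let ⟨_, _, hbot⟩ := WithBot.sum_eq_bot_iff.1 h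
      klDiv_ne_bot _ _ hbot
    rw [← Finset.add_sum_erase _ _ (Finset.mem_univ a), htop, EReal.top_add_of_ne_bot hrest,
      klDiv, if_neg hac]

lemma klDiv_pushf_le {p q : Ω → ℝ} (hp : ∀ ω, 0 ≤ p ω) (hq : ∀ ω, 0 ≤ q ω) (f : Ω → α) :
    klDiv (pushf p f) (pushf q f) ≤ klDiv p q := by
  classical
  by_cases hac : ∀ ω, q ω = 0 → p ω = 0
  · have hac' : ∀ a, pushf q f a = 0 → pushf p f a = 0 := by
      refine fun a ha => pushf_eq_zero ?_
      rintro ω rfl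
      exact hac ω (eq_zero_of_pushf_eq_zero hq ha)
    rw [klDiv, klDiv, if_pos hac, if_pos hac', EReal.coe_le_coe_iff,
      ← Finset.sum_fiberwise Finset.univ f]
    refine Finset.sum_le_sum fun a _ => ?_
    simp only [pushf, ← Finset.sum_filter]
    convert! sum_mul_log_sum_div_sum_le (fun ω _ => hp ω) (fun ω _ => hq ω) (fun ω _ => hac ω)
  · rw [klDiv.eq_def p q, if_neg hac]
    exact le_top

-- `klDiv` is finite exactly under absolute continuity: this is when both sides of the chain rule
-- are finite.
lemma forall_comp_mul_eq_zero_imp_iff {γ : Type*} {r : Ω → ℝ} (hr : ∀ ω, 0 ≤ r ω) (g : Ω → γ)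
    (q : γ → ℝ) (k : Ω → ℝ) :
    (∀ ω, q (g ω) * k ω = 0 → r ω = 0) ↔
      (∀ a, q a = 0 → pushf r g a = 0) ∧ ∀ ω, pushf r g (g ω) * k ω = 0 → r ω = 0 := by
  constructor
  · intro h
    refine ⟨fun a ha => pushf_eq_zero ?_, fun ω hω => ?_⟩
    · rintro ω rfl
      exact h ω (by rw [ha, zero_mul])
    · rcases mul_eq_zero.1 hω with hg | hk
      · exact eq_zero_of_pushf_eq_zero hr hg
      · exact h ω (by rw [hk, mul_zero])
  · rintro ⟨hq, hk⟩ ω hω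
    rcases mul_eq_zero.1 hω with hg | hkω
    · exact eq_zero_of_pushf_eq_zero hr (hq _ hg)
    · exact hk ω (by rw [hkω, mul_zero])

lemma klDiv_chain_rule {r : Ω → ℝ} (hr : ∀ ω, 0 ≤ r ω) (g : Ω → α) (q : α → ℝ) (k : Ω → ℝ) :
    klDiv r (fun ω => q (g ω) * k ω)
      = klDiv (pushf r g) q + klDiv r (fun ω => pushf r g (g ω) * k ω) := by
  have hac := forall_comp_mul_eq_zero_imp_iff hr g q k
  by_cases hq : ∀ a, q a = 0 → pushf r g a = 0
  swap
  · rw [klDiv, if_neg fun h => hq (hac.1 h).1, klDiv.eq_def (pushf r g) q, if_neg hq,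
      EReal.top_add_of_ne_bot (klDiv_ne_bot _ _)]
  by_cases hk : ∀ ω, pushf r g (g ω) * k ω = 0 → r ω = 0
  swap
  · rw [klDiv, if_neg fun h => hk (hac.1 h).2, klDiv.eq_def r, if_neg hk,
      EReal.add_top_of_ne_bot (klDiv_ne_bot _ _)]
  have hqk := hac.2 ⟨hq, hk⟩
  rw [klDiv, klDiv, klDiv, if_pos hqk, if_pos hq, if_pos hk, ← EReal.coe_add,
    EReal.coe_eq_coe_iff, sum_pushf_mul r g fun a => Real.log (pushf r g a / q a),
    ← Finset.sum_add_distrib]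
  refine Finset.sum_congr rfl fun ω _ => ?_
  rcases eq_or_ne (r ω) 0 with h0 | h0
  · simp only [h0, zero_mul, add_zero]
  · have hden := mul_ne_zero_iff.1 (mt (hqk ω) h0)
    have hnum := mul_ne_zero_iff.1 (mt (hk ω) h0)
    rw [← mul_add, ← Real.log_mul (div_ne_zero hnum.1 hden.1)
      (div_ne_zero h0 (mul_ne_zero hnum.1 hnum.2))]
    congr 2
    field_simp [hden.1, hden.2, hnum.1]

end Divergence

section AuxiliaryReceiver

variable {X Y Z U : Type*} [Fintype X] [Fintype Y] [Fintype Z] [Fintype U]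

lemma klDiv_fst_sub_klDiv_snd_le {r : Y × Z → ℝ} (hr : ∀ w, 0 ≤ r w) {q : Z → ℝ}
    (hq : ∀ z, 0 ≤ q z) {W : Z → Y → ℝ} (hW : ∀ z y, 0 ≤ W z y) :
    klDiv (pushf r Prod.fst) (outDist W q) - klDiv (pushf r Prod.snd) q
      ≤ klDiv r fun w => pushf r Prod.snd w.2 * W w.2 w.1 := by
  refine EReal.sub_le_of_le_add' ?_
  calc klDiv (pushf r Prod.fst) (outDist W q)
      = klDiv (pushf r Prod.fst) (pushf (fun w => q w.2 * W w.2 w.1) Prod.fst) := by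
        rw [pushf_fst_mul_channel]
    _ ≤ klDiv r fun w => q w.2 * W w.2 w.1 :=
        klDiv_pushf_le hr (fun w => mul_nonneg (hq _) (hW _ _)) _
    _ = klDiv (pushf r Prod.snd) q + klDiv r fun w => pushf r Prod.snd w.2 * W w.2 w.1 :=
        klDiv_chain_rule hr Prod.snd q fun w => W w.2 w.1

-- `K`, `V`, `W` play the roles of `P_{YZ|X}`, `Q_{Z|X}`, `Q_{Y|Z}`.
lemma fdiff_le_klDiv {K : X → Y × Z → ℝ} (hK : ∀ x w, 0 ≤ K x w) {V : X → Z → ℝ}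
    (hV : ∀ x z, 0 ≤ V x z) {W : Z → Y → ℝ} (hW : ∀ z y, 0 ≤ W z y) (qX : X → ℝ)
    {pX : X → ℝ} (hpX : ∀ x, 0 ≤ pX x) :
    fdiff (fun x => pushf (K x) Prod.fst) (fun x => pushf (K x) Prod.snd)
        (fun x => outDist W (V x)) V qX pX
      ≤ klDiv (outDist K pX)
          fun w => outDist (fun x => pushf (K x) Prod.snd) pX w.2 * W w.2 w.1 := by
  refine sSup_le ?_
  rintro _ ⟨qhX, hqhX, -, rfl⟩
  rw [outDist_pushf, outDist_pushf, outDist_outDist]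
  exact klDiv_fst_sub_klDiv_snd_le (outDist_nonneg hK hpX) (outDist_nonneg hV hqhX.1) hW

lemma sum_mul_fdiff_normalize_le {K : X → Y × Z → ℝ} (hK : ∀ x w, 0 ≤ K x w) {V : X → Z → ℝ}
    (hV : ∀ x z, 0 ≤ V x z) {W : Z → Y → ℝ} (hW : ∀ z y, 0 ≤ W z y) (qX : X → ℝ)
    {m : X → ℝ} (hm : ∀ x, 0 ≤ m x) :
    ((∑ x, m x : ℝ) : EReal) *
        fdiff (fun x => pushf (K x) Prod.fst) (fun x => pushf (K x) Prod.snd)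
          (fun x => outDist W (V x)) V qX (fun x => m x / ∑ x', m x')
      ≤ klDiv (outDist K m)
          fun w => outDist (fun x => pushf (K x) Prod.snd) m w.2 * W w.2 w.1 := by
  have hs : 0 ≤ ∑ x, m x := Finset.sum_nonneg fun x _ => hm x
  rcases hs.eq_or_lt with hs0 | hspos
  · have hm0 : m = 0 := (Fintype.sum_eq_zero_iff_of_nonneg hm).1 hs0.symm
    have hout : outDist K m = 0 := by
      funext w
      simp [outDist, hm0]
    rw [← hs0, hout, klDiv_zero_left, EReal.coe_zero, zero_mul]
  · set s := ∑ x, m x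
    have hdiv : (fun x => m x / s) = s⁻¹ • m := by
      funext x
      simp [div_eq_inv_mul]
    have hle := fdiff_le_klDiv hK hV hW qX (pX := s⁻¹ • m)
      fun x => mul_nonneg (inv_nonneg.2 hs) (hm x)
    rw [hdiv]
    refine (mul_le_mul_of_nonneg_left hle (EReal.coe_nonneg.2 hs)).trans_eq ?_
    rw [← klDiv_smul_smul hspos, outDist_smul, outDist_smul, smul_inv_smul₀ hspos.ne']
    congr 1
    funext w
    simp [← mul_assoc, hspos.ne']

theorem fdiff_le_klDiv_aux_receiver_general
    {K : X → Y × Z → ℝ} (hK : ∀ x w, 0 ≤ K x w) {V : X → Z → ℝ} (hV : ∀ x z, 0 ≤ V x z)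
    {W : Z → Y → ℝ} (hW : ∀ z y, 0 ≤ W z y) (qX : X → ℝ)
    {pUX : U × X → ℝ} (hpUX : ∀ w, 0 ≤ pUX w) :
    ∑ u, ((∑ x, pUX (u, x) : ℝ) : EReal) *
        fdiff (fun x => pushf (K x) Prod.fst) (fun x => pushf (K x) Prod.snd)
          (fun x => outDist W (V x)) V qX (fun x => pUX (u, x) / ∑ x', pUX (u, x'))
      ≤ klDiv
          (fun w : U × Y × Z => outDist K (fun x => pUX (w.1, x)) w.2)
          (fun w : U × Y × Z =>
            outDist (fun x => pushf (K x) Prod.snd) (fun x => pUX (w.1, x)) w.2.2 *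
              W w.2.2 w.2.1) := by
  rw [klDiv_prod]
  exact Finset.sum_le_sum fun u _ =>
    sum_mul_fdiff_normalize_le hK hV hW qX fun x => hpUX (u, x)

end AuxiliaryReceiver

section MarkovChain

variable {X Y Z : Type*} [Fintype X] [Fintype Y] [Fintype Z] {Q : X × Y × Z → ℝ}

lemma eq_pushf_mul_condSnd_of_markov (hQ : ∀ w, 0 ≤ Q w)
    (hMarkov : ∀ x y z, Q (x, y, z) * pushf Q (fun w => w.2.2) z
      = pushf Q (fun w => (w.1, w.2.2)) (x, z) * pushf Q (fun w => (w.2.1, w.2.2)) (y, z))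
    (x : X) (y : Y) (z : Z) :
    Q (x, y, z) = pushf Q (fun w => (w.1, w.2.2)) (x, z) *
      condSnd (pushf Q fun w => (w.2.2, w.2.1)) z y := by
  have hswap : pushf Q (fun w => (w.2.2, w.2.1)) (z, y)
      = pushf Q (fun w => (w.2.1, w.2.2)) (y, z) :=
    pushf_comp_apply Q (fun w => (w.2.1, w.2.2)) Prod.swap_injective (y, z)
  have hmarg : margFst (pushf Q fun w => (w.2.2, w.2.1)) z = pushf Q (fun w => w.2.2) z := by
    rw [← pushf_fst, pushf_pushf]
  rw [condSnd, hswap, hmarg, ← mul_div_assoc, ← hMarkov]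
  exact (mul_div_cancel_of_imp fun hz =>
    eq_zero_of_pushf_eq_zero (f := fun w => w.2.2) (ω := (x, y, z)) hQ hz).symm

lemma condSnd_eq_outDist_of_markov (hQ : ∀ w, 0 ≤ Q w)
    (hMarkov : ∀ x y z, Q (x, y, z) * pushf Q (fun w => w.2.2) z
      = pushf Q (fun w => (w.1, w.2.2)) (x, z) * pushf Q (fun w => (w.2.1, w.2.2)) (y, z)) :
    condSnd (pushf Q fun w => (w.1, w.2.1)) = fun x =>
      outDist (condSnd (pushf Q fun w => (w.2.2, w.2.1)))
        (condSnd (pushf Q fun w => (w.1, w.2.2)) x) := by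
  funext x
  rw [condSnd_pushf Q Prod.fst, ← pushf_fst_mul_channel]
  refine congrArg (pushf · Prod.fst) ?_
  funext ⟨y, z⟩
  rw [condSnd, condSnd, margFst_pushf Q Prod.snd, div_mul_eq_mul_div,
    ← eq_pushf_mul_condSnd_of_markov hQ hMarkov]

end MarkovChain

/-- If `X → Z → Y` is a Markov chain under `Q`, then for any `P_UX` with
`X`-marginal `P_X`, `∑_u P_U(u) f(P_{X|U}(·|u)) ≤ D(P_{UYZ} ‖ P_{UZ} Q_{Y|Z})`. -/
theorem fdiff_le_klDiv_aux_receiver {X Y Z U : Type*}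
    [Fintype X] [Fintype Y] [Fintype Z] [Fintype U]
    (P Q : X × Y × Z → ℝ) (hP : IsPMF P) (hQ : IsPMF Q)
    (hMarkov : ∀ x y z, Q (x, y, z) * pushf Q (fun w => w.2.2) z
      = pushf Q (fun w => (w.1, w.2.2)) (x, z) * pushf Q (fun w => (w.2.1, w.2.2)) (y, z))
    (pUX : U × X → ℝ) (hpUX : IsPMF pUX)
    (hmarg : ∀ x, ∑ u, pUX (u, x) = pushf P (fun w => w.1) x) :
    (∑ u, ((∑ x, pUX (u, x) : ℝ) : EReal) *
        fdiff (condSnd (pushf P (fun w => (w.1, w.2.1))))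
          (condSnd (pushf P (fun w => (w.1, w.2.2))))
          (condSnd (pushf Q (fun w => (w.1, w.2.1))))
          (condSnd (pushf Q (fun w => (w.1, w.2.2))))
          (pushf Q (fun w => w.1))
          (fun x => pUX (u, x) / ∑ x', pUX (u, x')))
      ≤ klDiv
          (fun w : U × Y × Z =>
            ∑ x, pUX (w.1, x) * (P (x, w.2.1, w.2.2) / pushf P (fun v => v.1) x))
          (fun w : U × Y × Z =>
            (∑ x, ∑ y, pUX (w.1, x) * (P (x, y, w.2.2) / pushf P (fun v => v.1) x)) *
              condSnd (pushf Q (fun v => (v.2.2, v.2.1))) w.2.2 w.2.1) := by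
  have hPX : pushf P (fun w => w.1) = margFst P := pushf_fst P
  rw [condSnd_pushf P Prod.fst, condSnd_pushf P Prod.snd, condSnd_eq_outDist_of_markov hQ.1 hMarkov,
    hPX]
  simpa only [outDist, condSnd, pushf_snd, Finset.mul_sum] using
    fdiff_le_klDiv_aux_receiver_general (condSnd_nonneg hP.1)
      (condSnd_nonneg (pushf_nonneg hQ.1 fun w => (w.1, w.2.2)))
      (condSnd_nonneg (pushf_nonneg hQ.1 fun w => (w.2.2, w.2.1))) (pushf Q fun w => w.1) hpUX.1

end
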